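/- arXiv:1205.6256 — 3 statements merged into one kernel-verified Lean document; each statement's English description precedes it below -/
import Mathlib

section
/- Every finite distributive lattice belongs to L(CFG), i.e. every finite distributive lattice is order-isomorphic to the configuration space of some chip firing game reaching a unique fixed point. -/
open Classical

section CFGdefs

variable {V : Type*}

/-- Out-degree of a vertex in a directed multigraph with edge multiplicities `E`. -/
noncomputable def outDeg (E : V → V → ℕ) (v : V) : ℕ := ∑ᶠ u, E v u

/-- A vertex is a sink if all its outgoing edges are loops. -/
def IsSink (E : V → V → ℕ) (v : V) : Prop := outDeg E v = E v v

/-- A vertex is firable in configuration `c`. -/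
def Firable (E : V → V → ℕ) (c : V → ℕ) (v : V) : Prop :=
  ¬ IsSink E v ∧ outDeg E v ≤ c v

/-- The result of firing vertex `v` in configuration `c`. -/
noncomputable def fire (E : V → V → ℕ) (c : V → ℕ) (v : V) : V → ℕ :=
  fun u => if u = v then c v - outDeg E v + E v v else c u + E v u

/-- The configuration obtained by firing a list of vertices in order. -/
noncomputable def fireList (E : V → V → ℕ) : (V → ℕ) → List V → (V → ℕ)
  | c, [] => c
  | c, v :: l => fireList E (fire E c v) l

/-- A list of vertices is a valid firing sequence from `c`. -/
def ValidSeq (E : V → V → ℕ) : (V → ℕ) → List V → Prop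
  | _, [] => True
  | c, v :: l => Firable E c v ∧ ValidSeq E (fire E c v) l

/-- `c'` is reachable from `c` by a finite sequence of firings. -/
def Reaches (E : V → V → ℕ) (c c' : V → ℕ) : Prop :=
  ∃ l : List V, ValidSeq E c l ∧ fireList E c l = c'

/-- A configuration with no firable vertex. -/
def FixedPt (E : V → V → ℕ) (c : V → ℕ) : Prop := ∀ v, ¬ Firable E c v

/-- The chip firing game `CFG(G,O)` reaches a unique fixed point. -/
def ReachesUFP (E : V → V → ℕ) (O : V → ℕ) : Prop :=
  ∃ fp : V → ℕ, Reaches E O fp ∧ FixedPt E fp ∧ ∀ c, Reaches E O c → Reaches E c fp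

/-- The game is simple: in every firing sequence from `O` to the fixed point,
each vertex fires at most once. -/
def SimpleCFG (E : V → V → ℕ) (O : V → ℕ) : Prop :=
  ∀ l : List V, ValidSeq E O l → FixedPt E (fireList E O l) → l.Nodup

/-- Single firing step from `c` to `c'` by firing vertex `v`. -/
def FireStep (E : V → V → ℕ) (c : V → ℕ) (v : V) (c' : V → ℕ) : Prop :=
  Firable E c v ∧ fire E c v = c'

/-- The partial order `L` is order-isomorphic to the configuration space of
`CFG(G,O)` ordered by reachability. -/
def Generates (E : V → V → ℕ) (O : V → ℕ) (L : Type*) [PartialOrder L] : Prop :=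
  ∃ f : L ≃ {c : V → ℕ // Reaches E O c},
    ∀ a b : L, a ≤ b ↔ Reaches E (f a).val (f b).val

/-- The support graph is connected (as an undirected graph). -/
def ConnectedG (E : V → V → ℕ) : Prop :=
  ∀ u v : V, Relation.ReflTransGen (fun a b => 0 < E a b ∨ 0 < E b a) u v

/-- The support graph together with its initial data is an Abelian Sandpile Model. -/
def IsASM (E : V → V → ℕ) : Prop :=
  ConnectedG E ∧ ∃ s : V, IsSink E s ∧ (∀ v, IsSink E v → v = s) ∧
    ∀ v₁ v₂ : V, v₁ ≠ v₂ → v₁ ≠ s → v₂ ≠ s → E v₁ v₂ = E v₂ v₁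

/-- The directed multigraph has no directed cycle. -/
def AcyclicG (E : V → V → ℕ) : Prop :=
  ∀ v : V, ¬ Relation.TransGen (fun a b => 0 < E a b) v v

end CFGdefs

/-- `L` is generated by some chip firing game reaching a unique fixed point. -/
def MemLCFG (L : Type*) [PartialOrder L] : Prop :=
  ∃ (V : Type) (_ : Finite V) (E : V → V → ℕ) (O : V → ℕ),
    ReachesUFP E O ∧ Generates E O L

/-- `L` is generated by some Abelian Sandpile Model reaching a unique fixed point. -/
def MemLASM (L : Type*) [PartialOrder L] : Prop :=
  ∃ (V : Type) (_ : Finite V) (E : V → V → ℕ) (O : V → ℕ),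
    IsASM E ∧ ReachesUFP E O ∧ Generates E O L

section Latticedefs

variable {L : Type*} [Lattice L]

/-- `m` is meet-irreducible: it has exactly one upper cover. -/
def MeetIrred (m : L) : Prop := ∃! y, m ⋖ y

/-- `j` is join-irreducible: it has exactly one lower cover. -/
def JoinIrred (j : L) : Prop := ∃! y, y ⋖ j

/-- The set `M_x \ M_y` of meet-irreducibles above `x` but not above `y`. -/
def MsetDiff (x y : L) : Set L := {m | MeetIrred m ∧ x ≤ m ∧ ¬ y ≤ m}

/-- The set `M \ M_a` of meet-irreducibles not above `a`. -/
def MnotAbove (a : L) : Set L := {m | MeetIrred m ∧ ¬ a ≤ m}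

/-- `x⁺`: the join of all upper covers of `x`. -/
noncomputable def uplus [Fintype L] [OrderBot L] (x : L) : L :=
  Finset.univ.sup (fun y => if x ⋖ y then y else ⊥)

/-- `L` is upper locally distributive: for every `x ≠ ⊤` the interval `[x, x⁺]`
is isomorphic to a Boolean lattice (a hypercube). -/
def IsULD (L : Type*) [Lattice L] [Fintype L] [BoundedOrder L] : Prop :=
  ∀ x : L, x ≠ ⊤ → ∃ n : ℕ, Nonempty (↥(Set.Icc x (uplus x)) ≃o Set (Fin n))

/-- `𝔘_m`: the minimal elements of `{x : ∃ y, x ⋖ y and 𝔪(x,y) = m}`. -/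
def Uset (m : L) : Set L :=
  {x | Minimal (fun z => ∃ y, z ⋖ y ∧ MsetDiff z y = {m}) x}

/-- `𝔏_m`: the maximal elements of `{x : a ≰ x for every a ∈ 𝔘_m}`. -/
def Lset (m : L) : Set L :=
  {x | Maximal (fun z => ∀ a ∈ Uset m, ¬ a ≤ z) x}

/-- `(w, e)` is a (non-negative integer) solution of the system `E(m)`. -/
def SolvesE [OrderBot L] (m : L) (w : ℕ) (e : L → ℕ) : Prop :=
  (Uset m = {(⊥ : L)} → 1 ≤ w) ∧
  (Uset m ≠ {(⊥ : L)} →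
    (∀ a ∈ Lset m, (∑ᶠ x ∈ MnotAbove a, e x) < w) ∧
    (∀ a ∈ Uset m, w ≤ ∑ᶠ x ∈ MnotAbove a, e x))

/-- The system `E(m)` has a non-negative integer solution. -/
def HasSolE [OrderBot L] (m : L) : Prop := ∃ w e, SolvesE m w e

/-- The variable `e_{x,m}` occurs in the system `𝔈(m)`. -/
def VarOccurs [OrderBot L] (x m : L) : Prop :=
  MeetIrred m ∧ Uset m ≠ {(⊥ : L)} ∧ ∃ a ∈ Uset m ∪ Lset m, x ∈ MnotAbove a

/-- `(W, Ee)` is a non-negative integer solution of the system `Ω`. -/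
def SolvesOmega [OrderBot L] (W : L → ℕ) (Ee : L → L → ℕ) : Prop :=
  (∀ m : L, MeetIrred m → SolvesE m (W m) (fun x => Ee x m)) ∧
  (∀ m₁ m₂ : L, m₁ ≠ m₂ → VarOccurs m₁ m₂ → VarOccurs m₂ m₁ → Ee m₁ m₂ = Ee m₂ m₁)

/-- The edge relation of the directed graph `𝒢` on the meet-irreducibles. -/
def Gedge (m₁ m₂ : L) : Prop :=
  MeetIrred m₁ ∧ MeetIrred m₂ ∧ ∃ a ∈ Uset m₂, m₁ ∈ MnotAbove a

end Latticedefs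

/-- The system `Ω` has a non-negative integer solution. -/
def HasSolOmega (L : Type*) [Lattice L] [OrderBot L] : Prop :=
  ∃ W Ee, SolvesOmega (L := L) W Ee

/-- The directed graph `𝒢` on the meet-irreducibles is acyclic. -/
def GAcyclic (L : Type*) [Lattice L] : Prop :=
  ∀ m : L, ¬ Relation.TransGen (Gedge (L := L)) m m

/-- Adjoining to a lower set an element all of whose predecessors lie in it. -/
def LowerSet.adjoin {P : Type*} [PartialOrder P] (S : LowerSet P) (p : P) (h : ∀ q < p, q ∈ S) : LowerSet P where
  carrier := insert p S
  lower' := by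
    rintro a b hba (rfl | ha)
    · rcases hba.eq_or_lt with rfl | hlt
      · exact Or.inl rfl
      · exact Or.inr (h b hlt)
    · exact Or.inr (S.lower hba ha)

theorem LowerSet.mem_adjoin {P : Type*} [PartialOrder P] {S : LowerSet P} {p : P}
    {h : ∀ q < p, q ∈ S} {q : P} :
    q ∈ S.adjoin p h ↔ q = p ∨ q ∈ S := Iff.rfl

theorem sum_ite_or_eq {P : Type*} [Fintype P] (f : P → ℕ) (A : P → Prop) (p : P)
    (hp : ¬ A p) :
    (∑ q, if q = p ∨ A q then f q else 0) = (∑ q, if A q then f q else 0) + f p := by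
  rw [← Fintype.sum_ite_eq' p f, ← Finset.sum_add_distrib]
  refine Finset.sum_congr rfl fun q _ => ?_
  by_cases hq : q = p
  · subst hq; simp [hp]
  · simp [hq]

theorem Reaches.trans_fire {V : Type*} {E : V → V → ℕ} {c d : V → ℕ} {v : V}
    (hv : Firable E c v) (h : Reaches E (fire E c v) d) : Reaches E c d := by
  obtain ⟨l, hl, rfl⟩ := h
  exact ⟨v :: l, ⟨hv, hl⟩, rfl⟩

section PosetGame

variable {P : Type*} [PartialOrder P] [Fintype P]

/-- The graph of the game attached to a finite poset `P`: each `p : P` has an edge to every larger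
element, and enough edges to the additional sink `none` to be able to fire only once. -/
noncomputable def posetEdge : Option P → Option P → ℕ
  | none, _ => 0
  | some p, none => 1 + ∑ q, if q < p then 1 else 0
  | some p, some q => if p < q then 1 else 0

/-- The configuration in which exactly the vertices of the lower set `S` have fired. -/
noncomputable def lowerSetConfig (S : LowerSet P) : Option P → ℕ
  | none => ∑ p, if p ∈ S then posetEdge (some p) none else 0
  | some p =>
    if p ∈ S then 0
    else 1 + (∑ q, if p < q then 1 else 0) + ∑ q, if q < p ∧ q ∈ S then 1 else 0

theorem outDeg_posetEdge_some (p : P) :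
    outDeg posetEdge (some p) =
      1 + (∑ q, if q < p then 1 else 0) + ∑ q, if p < q then 1 else 0 := by
  rw [outDeg, finsum_eq_sum_of_fintype, Fintype.sum_option]
  rfl

theorem isSink_posetEdge_none : IsSink (posetEdge (P := P)) none := by
  simp [IsSink, outDeg, posetEdge]

theorem not_isSink_posetEdge_some (p : P) : ¬ IsSink posetEdge (some p) := by
  rw [IsSink, outDeg_posetEdge_some]
  simp only [posetEdge, lt_irrefl, if_false]
  omega

theorem firable_lowerSetConfig_some (S : LowerSet P) (p : P) :
    Firable posetEdge (lowerSetConfig S) (some p) ↔ p ∉ S ∧ ∀ q < p, q ∈ S := by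
  rw [Firable, outDeg_posetEdge_some]
  simp only [not_isSink_posetEdge_some, not_false_eq_true, true_and, lowerSetConfig]
  by_cases hp : p ∈ S
  · simp [hp]
  simp only [hp, if_false, not_false_eq_true, true_and]
  constructor
  · intro h q hq
    by_contra hqS
    have : (∑ q, if q < p ∧ q ∈ S then 1 else 0) < ∑ q, if q < p then 1 else 0 := by
      refine Finset.sum_lt_sum (fun r _ => ?_) ⟨q, Finset.mem_univ q, by simp [hq, hqS]⟩
      split_ifs <;> simp_all
    omega
  · intro h
    have : (∑ q, if q < p ∧ q ∈ S then 1 else 0) = ∑ q, if q < p then 1 else 0 :=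
      Finset.sum_congr rfl fun q _ => by simp only [and_iff_left_of_imp (h q)]
    omega

theorem fire_lowerSetConfig (S : LowerSet P) (p : P) (hp : p ∉ S) (h : ∀ q < p, q ∈ S) :
    fire posetEdge (lowerSetConfig S) (some p) = lowerSetConfig (S.adjoin p h) := by
  funext v
  cases v with
  | none => simp [fire, lowerSetConfig, LowerSet.mem_adjoin, sum_ite_or_eq _ (· ∈ S) p hp]
  | some q =>
    by_cases hqp : q = p
    · subst hqp
      have : (∑ r, if r < q ∧ r ∈ S then 1 else 0) = ∑ r, if r < q then 1 else 0 :=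
        Finset.sum_congr rfl fun r _ => by simp only [and_iff_left_of_imp (h r)]
      simp only [fire, if_true, outDeg_posetEdge_some, posetEdge, lowerSetConfig, hp, if_false,
        LowerSet.mem_adjoin, true_or, lt_irrefl, this]
      omega
    · have hne : some q ≠ some p := fun e => hqp (Option.some.inj e)
      simp only [fire, hne, if_false, lowerSetConfig, LowerSet.mem_adjoin, hqp, false_or,
        posetEdge]
      by_cases hqS : q ∈ S
      · have : ¬ p < q := fun hlt => hp (S.lower hlt.le hqS)
        simp [hqS, this]
      · have := sum_ite_or_eq (fun r => if r < q then 1 else 0) (· ∈ S) p hp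
        simp only [← ite_and, and_comm (b := _ < q)] at this
        simp only [hqS, if_false, this, add_assoc]

theorem exists_lowerSet_of_validSeq (l : List (Option P)) (S : LowerSet P)
    (hl : ValidSeq posetEdge (lowerSetConfig S) l) :
    ∃ T, S ≤ T ∧ fireList posetEdge (lowerSetConfig S) l = lowerSetConfig T := by
  induction l generalizing S with
  | nil => exact ⟨S, le_rfl, rfl⟩
  | cons v l ih =>
    obtain ⟨hv, hl⟩ := hl
    cases v with
    | none => exact absurd isSink_posetEdge_none hv.1
    | some p =>
      obtain ⟨hp, h⟩ := (firable_lowerSetConfig_some S p).1 hv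
      rw [fire_lowerSetConfig S p hp h] at hl
      obtain ⟨T, hT, e⟩ := ih _ hl
      refine ⟨T, le_trans (fun q hq => Or.inr hq) hT, ?_⟩
      rw [fireList, fire_lowerSetConfig S p hp h, e]

theorem reaches_lowerSetConfig_of_le {S T : LowerSet P} (hST : S ≤ T) :
    Reaches posetEdge (lowerSetConfig S) (lowerSetConfig T) := by
  induction S using WellFoundedGT.induction with
  | ind S ih =>
    rcases hST.eq_or_lt with rfl | hlt
    · exact ⟨[], trivial, rfl⟩
    obtain ⟨p, ⟨hpT, hpS⟩, hmin⟩ :=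
      (Set.toFinite ((T : Set P) \ S)).exists_minimal
        (Set.sdiff_nonempty.2 fun h => hlt.not_ge h)
    have h : ∀ q < p, q ∈ S := fun q hq => by
      by_contra hqS
      exact hq.not_ge (hmin ⟨T.lower hq.le hpT, hqS⟩ hq.le)
    refine Reaches.trans_fire ((firable_lowerSetConfig_some S p).2 ⟨hpS, h⟩) ?_
    rw [fire_lowerSetConfig S p hpS h]
    refine ih _ (lt_of_le_of_ne (fun q hq => Or.inr hq) ?_) ?_
    · intro e
      exact hpS (e ▸ (Or.inl rfl : p ∈ S.adjoin p h))
    · rintro q (rfl | hq)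
      · exact hpT
      · exact hST hq

theorem lowerSetConfig_injective : Function.Injective (lowerSetConfig (P := P)) := by
  have key : ∀ (S : LowerSet P) p, p ∈ S ↔ lowerSetConfig S (some p) = 0 := fun S p => by
    by_cases hp : p ∈ S <;> simp [lowerSetConfig, hp]
  intro S T h
  ext p
  exact (key S p).trans (h ▸ (key T p).symm)

theorem reaches_lowerSetConfig_iff {S : LowerSet P} {c : Option P → ℕ} :
    Reaches posetEdge (lowerSetConfig S) c ↔ ∃ T, S ≤ T ∧ c = lowerSetConfig T := by
  constructor
  · rintro ⟨l, hl, rfl⟩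
    exact exists_lowerSet_of_validSeq l S hl
  · rintro ⟨T, hT, rfl⟩
    exact reaches_lowerSetConfig_of_le hT

theorem reaches_lowerSetConfig_iff_le {S T : LowerSet P} :
    Reaches posetEdge (lowerSetConfig S) (lowerSetConfig T) ↔ S ≤ T := by
  rw [reaches_lowerSetConfig_iff]
  constructor
  · rintro ⟨U, hU, e⟩
    rwa [lowerSetConfig_injective e]
  · exact fun h => ⟨T, h, rfl⟩

theorem fixedPt_lowerSetConfig_top : FixedPt posetEdge (lowerSetConfig (⊤ : LowerSet P)) := by
  rintro (_ | p) h
  · exact h.1 isSink_posetEdge_none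
  · exact ((firable_lowerSetConfig_some _ _).1 h).1 trivial

theorem reachesUFP_poset : ReachesUFP posetEdge (lowerSetConfig (⊥ : LowerSet P)) := by
  refine ⟨lowerSetConfig ⊤, reaches_lowerSetConfig_of_le bot_le, fixedPt_lowerSetConfig_top, ?_⟩
  intro c hc
  obtain ⟨T, -, rfl⟩ := reaches_lowerSetConfig_iff.1 hc
  exact reaches_lowerSetConfig_of_le le_top

theorem generates_poset {L : Type*} [PartialOrder L] (g : L ≃o LowerSet P) :
    Generates posetEdge (lowerSetConfig (⊥ : LowerSet P)) L := by
  refine ⟨Equiv.ofBijective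
    (fun a => ⟨lowerSetConfig (g a), reaches_lowerSetConfig_of_le bot_le⟩) ⟨?_, ?_⟩, ?_⟩
  · intro a b h
    exact g.injective (lowerSetConfig_injective (Subtype.ext_iff.1 h))
  · rintro ⟨c, hc⟩
    obtain ⟨T, -, rfl⟩ := reaches_lowerSetConfig_iff.1 hc
    exact ⟨g.symm T, by simp⟩
  · intro a b
    exact (g.le_iff_le.symm).trans reaches_lowerSetConfig_iff_le.symm

end PosetGame

/-- every finite distributive lattice belongs to `L(CFG)`. -/
theorem stmt8 {L : Type*} [DistribLattice L] [Fintype L] [BoundedOrder L] :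
    MemLCFG L := by
  let o := orderIsoShrink.{0} {a : L // SupIrred a}
  let _ : Fintype (Shrink.{0} {a : L // SupIrred a}) := Fintype.ofEquiv _ o.toEquiv
  exact ⟨Option (Shrink.{0} {a : L // SupIrred a}), inferInstance, posetEdge, lowerSetConfig ⊥,
    reachesUFP_poset, generates_poset (OrderIso.lowerSetSupIrred.trans (LowerSet.map o))⟩
end

section
/- Let CFG(G,O) be a chip firing game reaching a unique fixed point (not necessarily simple), with configuration space the finite ULD lattice L = CFG(G,O). Then the map κ : M → V(G) × ℕ defined by κ(m) = (ϑ(c,c'), δ_{c'}(ϑ(c,c'))), where c ⋖ c' is any cover of configurations with 𝔪(c,c') = m and ϑ(c,c') is the vertex fired to pass from c to c', is well-defined (independent of the chosen cover) and injective. -/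
open Classical

section Firing

variable {V : Type*} {E : V → V → ℕ}

theorem fireList_append (c : V → ℕ) (l₁ l₂ : List V) :
    fireList E c (l₁ ++ l₂) = fireList E (fireList E c l₁) l₂ := by
  induction l₁ generalizing c with
  | nil => rfl
  | cons v l ih => exact ih _

theorem validSeq_append {c : V → ℕ} {l₁ l₂ : List V} :
    ValidSeq E c (l₁ ++ l₂) ↔ ValidSeq E c l₁ ∧ ValidSeq E (fireList E c l₁) l₂ := by
  induction l₁ generalizing c with
  | nil => simp [ValidSeq, fireList]
  | cons v l ih => simp [ValidSeq, fireList, ih, and_assoc]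

/-- Conservation of chips at the vertex `u` along a valid firing sequence. -/
theorem fireList_add_count_mul {c : V → ℕ} {l : List V} (h : ValidSeq E c l) (u : V) :
    fireList E c l u + l.count u * outDeg E u = c u + (l.map fun w => E w u).sum := by
  induction l generalizing c with
  | nil => simp [fireList]
  | cons v l ih =>
    have h₁ := ih h.2
    have h₂ := h.1.2
    by_cases huv : u = v
    · subst huv
      simp only [fire, if_true] at h₁
      simp only [fireList, List.count_cons_self, List.map_cons, List.sum_cons, add_mul, one_mul]
      omega
    · simp only [fire, if_neg huv] at h₁
      simp only [fireList, List.count_cons_of_ne (Ne.symm huv), List.map_cons, List.sum_cons]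
      omega

theorem fireList_eq_of_perm {c : V → ℕ} {l₁ l₂ : List V} (h₁ : ValidSeq E c l₁)
    (h₂ : ValidSeq E c l₂) (h : l₁.Perm l₂) : fireList E c l₁ = fireList E c l₂ := by
  funext u
  have e₁ := fireList_add_count_mul h₁ u
  have e₂ := fireList_add_count_mul h₂ u
  rw [h.count_eq, (h.map _).sum_eq] at e₁
  omega

theorem Firable.fire_of_ne {c : V → ℕ} {v w : V} (h : Firable E c v) (hvw : v ≠ w) :
    Firable E (fire E c w) v := by
  refine ⟨h.1, ?_⟩
  have := h.2
  simp only [fire, if_neg hvw]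
  omega

theorem fire_comm_of_firable {c : V → ℕ} {v w : V} (hv : Firable E c v) (hw : Firable E c w)
    (hvw : v ≠ w) : fire E (fire E c v) w = fire E (fire E c w) v :=
  fireList_eq_of_perm (l₁ := [v, w]) (l₂ := [w, v])
    ⟨hv, hw.fire_of_ne hvw.symm, trivial⟩ ⟨hw, hv.fire_of_ne hvw, trivial⟩
    (List.Perm.swap _ _ _)

theorem Firable.fireList_of_notMem {c : V → ℕ} {v : V} {l : List V} (h : Firable E c v)
    (hv : v ∉ l) : Firable E (fireList E c l) v := by
  induction l generalizing c with
  | nil => exact h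
  | cons w l ih =>
    rw [List.mem_cons, not_or] at hv
    exact ih (h.fire_of_ne hv.1) hv.2

/-- Firing `v` first leaves the rest of a valid sequence valid once its first `v` is removed. -/
theorem ValidSeq.erase_of_firable {c : V → ℕ} {v : V} {l : List V} (hl : ValidSeq E c l)
    (hv : Firable E c v) : ValidSeq E (fire E c v) (l.erase v) := by
  induction l generalizing c with
  | nil => trivial
  | cons w l ih =>
    by_cases hwv : w = v
    · subst hwv
      simpa using hl.2
    · rw [List.erase_cons_tail (by simpa using hwv)]
      refine ⟨hl.1.fire_of_ne hwv, ?_⟩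
      rw [fire_comm_of_firable hv hl.1 (Ne.symm hwv)]
      exact ih hl.2 (hv.fire_of_ne (Ne.symm hwv))

/-- Two valid sequences have a common continuation whose counts are the pointwise maximum. -/
theorem ValidSeq.exists_append_count_eq_max {c : V → ℕ} {l₁ l₂ : List V}
    (h₁ : ValidSeq E c l₁) (h₂ : ValidSeq E c l₂) :
    ∃ l₃, ValidSeq E c (l₁ ++ l₃) ∧
      ∀ v, (l₁ ++ l₃).count v = max (l₁.count v) (l₂.count v) := by
  induction l₂ generalizing c l₁ with
  | nil => exact ⟨[], by simpa using h₁, by simp⟩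
  | cons v t ih =>
    have hv := h₂.1
    have he := h₁.erase_of_firable hv
    obtain ⟨l₃, h₃, hc⟩ := ih he h₂.2
    obtain ⟨-, h₃⟩ := validSeq_append.1 h₃
    have hve : ValidSeq E c (v :: l₁.erase v) := ⟨hv, he⟩
    by_cases hmem : v ∈ l₁
    · have hp : l₁.Perm (v :: l₁.erase v) := List.perm_cons_erase hmem
      have heq : fireList E c l₁ = fireList E (fire E c v) (l₁.erase v) :=
        fireList_eq_of_perm h₁ hve hp
      refine ⟨l₃, validSeq_append.2 ⟨h₁, heq ▸ h₃⟩, fun u => ?_⟩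
      have := hc u
      rw [List.count_append] at this ⊢
      rw [hp.count_eq, List.count_cons, List.count_cons]
      omega
    · rw [List.erase_of_not_mem hmem] at h₃ hc hve
      have hlv : ValidSeq E c (l₁ ++ [v]) :=
        validSeq_append.2 ⟨h₁, hv.fireList_of_notMem hmem, trivial⟩
      have heq : fireList E c (l₁ ++ [v]) = fireList E (fire E c v) l₁ :=
        fireList_eq_of_perm hlv hve (List.perm_append_singleton v l₁)
      refine ⟨v :: l₃, ?_, fun u => ?_⟩
      · rw [List.append_cons]
        exact validSeq_append.2 ⟨hlv, heq ▸ h₃⟩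
      · have := hc u
        rw [List.count_append] at this ⊢
        rw [List.count_cons, List.count_cons]
        by_cases hvu : v = u
        · subst hvu
          have := List.count_eq_zero_of_not_mem hmem
          simp only [beq_self_eq_true, if_true]
          omega
        · simp only [beq_iff_eq, hvu, if_false]
          omega

theorem ValidSeq.count_le_of_fixedPt {c : V → ℕ} {l₁ l₂ : List V}
    (h₁ : ValidSeq E c l₁) (hfix : FixedPt E (fireList E c l₁)) (h₂ : ValidSeq E c l₂) (v : V) :
    l₂.count v ≤ l₁.count v := by
  obtain ⟨l₃, h₃, hc⟩ := h₁.exists_append_count_eq_max h₂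
  cases l₃ with
  | nil =>
    have := hc v
    rw [List.append_nil] at this
    omega
  | cons w t => exact absurd (validSeq_append.1 h₃).2.1 (hfix w)

/-- The shot-vector of a reachable configuration does not depend on the firing sequence. -/
theorem ReachesUFP.count_eq {O : V → ℕ} (hUFP : ReachesUFP E O) {l₁ l₂ : List V}
    (h₁ : ValidSeq E O l₁) (h₂ : ValidSeq E O l₂) (h : fireList E O l₁ = fireList E O l₂) (v : V) :
    l₁.count v = l₂.count v := by
  obtain ⟨fp, -, hfix, hreach⟩ := hUFP
  obtain ⟨s, hs, hfp⟩ := hreach _ ⟨l₁, h₁, rfl⟩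
  have hs₂ : ValidSeq E (fireList E O l₂) s := h ▸ hs
  have h₁s : ValidSeq E O (l₁ ++ s) := validSeq_append.2 ⟨h₁, hs⟩
  have h₂s : ValidSeq E O (l₂ ++ s) := validSeq_append.2 ⟨h₂, hs₂⟩
  have hfix₁ : FixedPt E (fireList E O (l₁ ++ s)) := by rwa [fireList_append, hfp]
  have hfix₂ : FixedPt E (fireList E O (l₂ ++ s)) := by rwa [fireList_append, ← h, hfp]
  have a := h₁s.count_le_of_fixedPt hfix₁ h₂s v
  have b := h₂s.count_le_of_fixedPt hfix₂ h₁s v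
  rw [List.count_append, List.count_append] at a b
  omega

end Firing

/-- In a finite lattice, everything strictly above a meet-irreducible is above its upper cover. -/
theorem MeetIrred.cover_le_of_lt {L : Type*} [Lattice L] [Finite L] {m y z : L}
    (hm : MeetIrred m) (hy : m ⋖ y) (hz : m < z) : y ≤ z := by
  obtain ⟨w, hw, hwz⟩ := exists_covBy_le_of_lt hz
  rwa [hm.unique hy hw]

/-- The shot-vector maps a lattice of reachable configurations to `V → ℕ`, turning joins into
pointwise maxima, and covers are single firings. -/
theorem ReachesUFP.exists_shotVector {V : Type*} {E : V → V → ℕ} {O : V → ℕ}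
    (hUFP : ReachesUFP E O) {L : Type*} [Lattice L]
    (f : L ≃ {c : V → ℕ // Reaches E O c})
    (hf : ∀ a b : L, a ≤ b ↔ Reaches E (f a).val (f b).val) :
    ∃ δ : L → V → ℕ,
      (∀ x l, ValidSeq E O l → fireList E O l = (f x).val → ∀ v, l.count v = δ x v) ∧
      (∀ x y, δ (x ⊔ y) = δ x ⊔ δ y) ∧
      (∀ x y v, FireStep E (f x).val v (f y).val → δ y = δ x + Pi.single v 1) ∧
      (∀ x y, x ⋖ y → ∃ v, FireStep E (f x).val v (f y).val) := by
  choose s hs hsf using fun x => (f x).property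
  let δ : L → V → ℕ := fun x v => (s x).count v
  have hcount : ∀ x l, ValidSeq E O l → fireList E O l = (f x).val →
      ∀ v, l.count v = δ x v := fun x l hl hlx v =>
    hUFP.count_eq hl (hs x) (hlx.trans (hsf x).symm) v
  have hmono : ∀ x y, x ≤ y → δ x ≤ δ y := fun x y hxy v => by
    obtain ⟨t, ht, hty⟩ := (hf x y).1 hxy
    rw [← hcount y (s x ++ t) (validSeq_append.2 ⟨hs x, by rwa [hsf x]⟩)
      (by rw [fireList_append, hsf x, hty]), List.count_append]
    exact Nat.le_add_right _ _
  have hstep : ∀ x y v, FireStep E (f x).val v (f y).val → δ y = δ x + Pi.single v 1 :=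
    fun x y v h => by
      funext u
      rw [← hcount y (s x ++ [v])
        (validSeq_append.2 ⟨hs x, by rw [hsf x]; exact ⟨h.1, trivial⟩⟩)
        (by rw [fireList_append, hsf x]; exact h.2), List.count_append, List.count_singleton]
      simp only [Pi.add_apply, Pi.single_apply, beq_iff_eq, eq_comm (a := v), δ]
  refine ⟨δ, hcount, fun x y => ?_, hstep, fun x y hxy => ?_⟩
  · apply le_antisymm
    · obtain ⟨p, hp, hpc⟩ := (hs x).exists_append_count_eq_max (hs y)
      obtain ⟨q, hq, hqc⟩ := (hs y).exists_append_count_eq_max (hs x)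
      obtain ⟨z, hz⟩ := f.surjective ⟨fireList E O (s x ++ p), _, hp, rfl⟩
      have hz : (f z).val = fireList E O (s x ++ p) := congrArg Subtype.val hz
      have hpq : fireList E O (s x ++ p) = fireList E O (s y ++ q) :=
        fireList_eq_of_perm hp hq (List.perm_iff_count.2 fun v => by
          rw [hpc, hqc, max_comm])
      have hxz : x ≤ z := (hf x z).2
        ⟨p, by rw [← hsf x]; exact (validSeq_append.1 hp).2, by
          rw [hz, fireList_append, hsf x]⟩
      have hyz : y ≤ z := (hf y z).2
        ⟨q, by rw [← hsf y]; exact (validSeq_append.1 hq).2, by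
          rw [hz, hpq, fireList_append, hsf y]⟩
      refine (hmono _ _ (sup_le hxz hyz)).trans fun v => ?_
      rw [← hcount z _ hp hz.symm, hpc]
      exact le_rfl
    · exact sup_le (hmono _ _ le_sup_left) (hmono _ _ le_sup_right)
  · obtain ⟨t, ht, hty⟩ := (hf x y).1 hxy.le
    cases t with
    | nil => exact absurd (f.injective (Subtype.ext hty)) hxy.lt.ne
    | cons v t =>
      have hv : Reaches E O (fire E (f x).val v) := ⟨s x ++ [v],
        validSeq_append.2 ⟨hs x, by rw [hsf x]; exact ⟨ht.1, trivial⟩⟩,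
        by rw [fireList_append, hsf x]; rfl⟩
      obtain ⟨z, hz⟩ := f.surjective ⟨_, hv⟩
      have hz : (f z).val = fire E (f x).val v := congrArg Subtype.val hz
      have hxz : x ≤ z := (hf x z).2 ⟨[v], ⟨ht.1, trivial⟩, hz.symm⟩
      have hzy : z ≤ y := (hf z y).2 ⟨t, by rw [hz]; exact ht.2, by rw [hz]; exact hty⟩
      have hfire : FireStep E (f x).val v (f z).val := ⟨ht.1, hz.symm⟩
      have hne : x ≠ z := fun h => by
        have := congrFun (hstep x z v hfire) v
        rw [← h] at this
        simp at this
      rcases hxy.eq_or_eq hxz hzy with h | h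
      · exact absurd h.symm hne
      · exact ⟨v, h ▸ hfire⟩

/-- for a (not necessarily simple) CFG reaching a unique fixed point
generating the finite ULD lattice `L`, the map `κ : M → V × ℕ` sending `m` to the pair
(vertex fired in any cover `c ⋖ c'` with `𝔪(c,c') = m`, its shot-vector value at `c'`)
is well-defined and injective. -/
theorem stmt9 {V : Type*} [Finite V] (E : V → V → ℕ) (O : V → ℕ)
    (hUFP : ReachesUFP E O)
    {L : Type*} [Lattice L] [Fintype L] [BoundedOrder L] (hULD : IsULD L)
    (f : L ≃ {c : V → ℕ // Reaches E O c})
    (hf : ∀ a b : L, a ≤ b ↔ Reaches E (f a).val (f b).val) :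
    ∃ κ : {m : L // MeetIrred m} → V × ℕ,
      (∀ (m : {m : L // MeetIrred m}) (c c' : L) (v : V) (l : List V),
        c ⋖ c' → MsetDiff c c' = {m.val} → FireStep E (f c).val v (f c').val →
        ValidSeq E O l → fireList E O l = (f c').val →
        κ m = (v, l.count v)) ∧
      Function.Injective κ := by
  obtain ⟨δ, hcount, hsup, hstep, hcov⟩ := hUFP.exists_shotVector f hf
  have hmono : ∀ {x y : L}, x ≤ y → ∀ v, δ x v ≤ δ y v := fun {x y} hxy v => by
    rw [← sup_eq_right.2 hxy, hsup]
    exact le_sup_left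
  choose up hup using fun m : {m : L // MeetIrred m} => m.property.exists
  choose w hw using fun m => hcov m.val (up m) (hup m)
  have hup_w : ∀ m, δ (up m) (w m) = δ m.val (w m) + 1 := fun m => by
    simp [hstep _ _ _ (hw m)]
  refine ⟨fun m => (w m, δ (up m) (w m)), fun m c c' v l _ hm hv hl hlc => ?_, ?_⟩
  · have hmem : m.val ∈ MsetDiff c c' := by rw [hm]; rfl
    obtain ⟨-, hcm, hcm'⟩ := hmem
    have hle := m.property.cover_le_of_lt (hup m) (left_lt_sup.2 hcm')
    have hδc := congrFun (hstep _ _ _ hv)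
    have hw_le := hmono hle (w m)
    rw [hup_w, hsup, Pi.sup_apply, hδc] at hw_le
    have hwv : w m = v := by
      by_contra hne
      have := hmono hcm (w m)
      simp [Pi.single_eq_of_ne hne] at hw_le
      omega
    have hv_eq : δ m.val v = δ c v := by
      have := hmono hcm v
      rw [hwv] at hw_le
      simp at hw_le
      omega
    dsimp only
    rw [hcount c' l hl hlc, hup_w, hwv, hδc, hv_eq]
    simp
  · have key : ∀ m n : {m : L // MeetIrred m}, w m = w n →
        δ (up m) (w m) = δ (up n) (w n) → n.val ≤ m.val := fun m n h₁ h₂ => by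
      by_contra hnm
      have hle := hmono (m.property.cover_le_of_lt (hup m) (left_lt_sup.2 hnm)) (w m)
      have hm := hup_w m
      have hn := hup_w n
      rw [hsup, Pi.sup_apply] at hle
      rw [← h₁] at h₂ hn
      rcases le_sup_iff.1 hle with h | h <;> omega
    intro m n hmn
    obtain ⟨h₁, h₂⟩ := Prod.mk.inj hmn
    exact Subtype.ext (le_antisymm (key n m h₁.symm h₂.symm) (key m n h₁ h₂))
end

section
/- Let L be a finite ULD lattice. If the system Ω has a non-negative integer solution, then L belongs to L(ASM), i.e. L is order-isomorphic to the configuration space of some Abelian Sandpile Model reaching a unique fixed point. -/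
open Classical

section Game

variable {ι : Type} [Fintype ι] (e : ι → ι → ℕ) (T : ι → ℕ)

/-- The sandpile graph with symmetric weights `e` on `ι` and `T i + 1` edges from `i` to the sink. -/
def sandEdges : Option ι → Option ι → ℕ
  | some i, some j => e i j
  | some i, none => T i + 1
  | none, _ => 0

/-- The configuration in which exactly the vertices of `A` have fired once. -/
noncomputable def sandConf (A : Finset ι) : Option ι → ℕ
  | some i => if i ∈ A then ∑ j ∈ A, e j i - T i else ∑ j, e j i + 1 + ∑ j ∈ A, e j i
  | none => ∑ i ∈ A, (T i + 1)

lemma outDeg_sandEdges_some (i : ι) :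
    outDeg (sandEdges e T) (some i) = T i + 1 + ∑ j, e i j := by
  rw [outDeg, finsum_eq_sum_of_fintype, Fintype.sum_option]
  rfl

lemma isSink_sandEdges_none : IsSink (sandEdges e T) none := by
  rw [IsSink, outDeg, finsum_eq_sum_of_fintype]
  simp [sandEdges]

lemma not_isSink_sandEdges_some (i : ι) : ¬ IsSink (sandEdges e T) (some i) := by
  rw [IsSink, outDeg_sandEdges_some]
  have h : e i i ≤ ∑ j, e i j :=
    Finset.single_le_sum (f := fun j => e i j) (fun _ _ => Nat.zero_le _) (Finset.mem_univ i)
  change ¬ (_ = e i i)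
  omega

lemma isASM_sandEdges (hsymm : ∀ i j, e i j = e j i) : IsASM (sandEdges e T) := by
  constructor
  · have to_none : ∀ u : Option ι, Relation.ReflTransGen
        (fun a b => 0 < sandEdges e T a b ∨ 0 < sandEdges e T b a) u none := by
      rintro (_ | i)
      · exact .refl
      · exact .single (Or.inl (Nat.succ_pos _))
    have from_none : ∀ u : Option ι, Relation.ReflTransGen
        (fun a b => 0 < sandEdges e T a b ∨ 0 < sandEdges e T b a) none u := by
      rintro (_ | i)
      · exact .refl
      · exact .single (Or.inr (Nat.succ_pos _))
    exact fun u v => (to_none u).trans (from_none v)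
  · refine ⟨none, isSink_sandEdges_none e T, ?_, ?_⟩
    · rintro (_ | i) h
      · rfl
      · exact absurd h (not_isSink_sandEdges_some e T i)
    · rintro (_ | i) (_ | j) - h₁ h₂
      · rfl
      · exact absurd rfl h₁
      · exact absurd rfl h₂
      · exact hsymm i j

variable {e T}

lemma firable_sandConf_iff (hsymm : ∀ i j, e i j = e j i) (A : Finset ι) (v : Option ι) :
    Firable (sandEdges e T) (sandConf e T A) v ↔
      ∃ i, v = some i ∧ i ∉ A ∧ T i ≤ ∑ j ∈ A, e j i := by
  rcases v with _ | i
  · simp [Firable, isSink_sandEdges_none]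
  · have hA : ∑ j ∈ A, e j i ≤ ∑ j, e j i :=
      Finset.sum_le_sum_of_subset (Finset.subset_univ A)
    have hs : ∑ j, e i j = ∑ j, e j i := Finset.sum_congr rfl fun j _ => hsymm i j
    rw [Firable, outDeg_sandEdges_some, hs, sandConf]
    simp only [not_isSink_sandEdges_some, not_false_eq_true, true_and, Option.some.injEq,
      exists_eq_left']
    split_ifs with h
    · simp only [h, not_true_eq_false, false_and, iff_false]
      omega
    · simp only [h, not_false_eq_true, true_and]
      omega

lemma fire_sandConf (hsymm : ∀ i j, e i j = e j i) (hloop : ∀ i, e i i = 0)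
    {A : Finset ι} {i : ι} (hi : i ∉ A) (hT : ∀ k ∈ A, T k ≤ ∑ j ∈ A, e j k) :
    fire (sandEdges e T) (sandConf e T A) (some i) = sandConf e T (insert i A) := by
  funext v
  have hs : ∑ j, e i j = ∑ j, e j i := Finset.sum_congr rfl fun j _ => hsymm i j
  rcases v with _ | k
  · simp [fire, sandConf, sandEdges, Finset.sum_insert hi, add_comm]
  · by_cases hk : k = i
    · subst hk
      simp only [fire, if_true, outDeg_sandEdges_some, sandConf, hi, if_false, sandEdges, hloop, hs,
        Finset.mem_insert_self, Finset.sum_insert hi]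
      omega
    · by_cases hkA : k ∈ A
      · have := hT k hkA
        simp only [fire, sandConf, sandEdges, Option.some.injEq, hk, if_false, hkA, if_true,
          Finset.mem_insert, or_true, Finset.sum_insert hi]
        omega
      · simp only [fire, sandConf, sandEdges, Option.some.injEq, hk, if_false, hkA,
          Finset.mem_insert, or_self, Finset.sum_insert hi]
        omega

lemma sandConf_injective : Function.Injective (sandConf e T) := by
  have key : ∀ A i, i ∈ A ↔ sandConf e T A (some i) ≤ ∑ j, e j i := by
    intro A i
    have hA : ∑ j ∈ A, e j i ≤ ∑ j, e j i :=
      Finset.sum_le_sum_of_subset (Finset.subset_univ A)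
    rw [sandConf]
    split_ifs with h
    · simp only [h, true_iff]; omega
    · simp only [h, false_iff]; omega
  intro A B h
  ext i
  rw [key, key, h]

/-- A finite bounded order represented by firing sets is generated by a sandpile model, provided
the vertices with enough fired weight are exactly those whose firing leads to another set. -/
theorem memLASM_of_representation {L : Type*} [PartialOrder L] [Finite L] [BoundedOrder L]
    (S : L → Finset ι) (hS : ∀ x y, x ≤ y ↔ S x ⊆ S y) (hbot : S ⊥ = ∅)
    (hsymm : ∀ i j, e i j = e j i) (hloop : ∀ i, e i i = 0)
    (hstep : ∀ x i, i ∉ S x → T i ≤ ∑ j ∈ S x, e j i → ∃ y, S y = insert i (S x))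
    (hcov : ∀ x y, x ⋖ y → ∃ i, i ∉ S x ∧ S y = insert i (S x) ∧ T i ≤ ∑ j ∈ S x, e j i) :
    MemLASM L := by
  have hfired : ∀ x, ∀ k ∈ S x, T k ≤ ∑ j ∈ S x, e j k := by
    intro x
    induction x using WellFoundedLT.induction with
    | ind x ih =>
      intro k hk
      have hx : ⊥ < x := bot_lt_iff_ne_bot.2 (by rintro rfl; simp [hbot] at hk)
      obtain ⟨z, -, hz⟩ := hx.exists_le_covby
      obtain ⟨i, -, hzx, hT⟩ := hcov z x hz
      have hsub : ∑ j ∈ S z, e j k ≤ ∑ j ∈ S x, e j k :=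
        Finset.sum_le_sum_of_subset ((hS z x).1 hz.le)
      rw [hzx, Finset.mem_insert] at hk
      rcases hk with rfl | hk
      · exact hT.trans hsub
      · exact (ih z hz.lt k hk).trans hsub
  have hfire : ∀ {x y : L} {i : ι}, i ∉ S x → S y = insert i (S x) →
      fire (sandEdges e T) (sandConf e T (S x)) (some i) = sandConf e T (S y) := by
    intro x y i hi hy
    rw [hy, fire_sandConf hsymm hloop hi (hfired x)]
  have hup : ∀ (y x : L), x ≤ y →
      Reaches (sandEdges e T) (sandConf e T (S x)) (sandConf e T (S y)) := by
    intro y x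
    induction x using WellFoundedGT.induction with
    | ind x ih =>
      intro hxy
      rcases hxy.eq_or_lt with rfl | hlt
      · exact ⟨[], trivial, rfl⟩
      · obtain ⟨z, hz, hzy⟩ := hlt.exists_covby_le
        obtain ⟨i, hi, hzx, hT⟩ := hcov x z hz
        obtain ⟨l, hl, hl'⟩ := ih z hz.lt hzy
        have hf := hfire hi hzx
        refine ⟨some i :: l, ⟨(firable_sandConf_iff hsymm _ _).2 ⟨i, rfl, hi, hT⟩, ?_⟩, ?_⟩
        · rwa [hf]
        · rwa [fireList, hf]
  have hdown : ∀ (l : List (Option ι)) (x : L),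
      ValidSeq (sandEdges e T) (sandConf e T (S x)) l →
      ∃ y, x ≤ y ∧ fireList (sandEdges e T) (sandConf e T (S x)) l = sandConf e T (S y) := by
    intro l
    induction l with
    | nil => exact fun x _ => ⟨x, le_rfl, rfl⟩
    | cons v l ih =>
      rintro x ⟨hv, hl⟩
      obtain ⟨i, rfl, hi, hT⟩ := (firable_sandConf_iff hsymm _ _).1 hv
      obtain ⟨z, hz⟩ := hstep x i hi hT
      have hf := hfire hi hz
      rw [hf] at hl
      obtain ⟨y, hzy, hy⟩ := ih z hl
      refine ⟨y, le_trans ((hS x z).2 ?_) hzy, ?_⟩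
      · rw [hz]; exact Finset.subset_insert _ _
      · rw [fireList, hf, hy]
  have hSinj : Function.Injective S := fun x y h =>
    le_antisymm ((hS x y).2 h.le) ((hS y x).2 h.ge)
  have hinj : Function.Injective fun x => sandConf e T (S x) :=
    sandConf_injective.comp hSinj
  have hreach : ∀ x y, Reaches (sandEdges e T) (sandConf e T (S x)) (sandConf e T (S y)) ↔
      x ≤ y := by
    refine fun x y => ⟨?_, hup y x⟩
    rintro ⟨l, hl, hl'⟩
    obtain ⟨z, hxz, hz⟩ := hdown l x hl
    rwa [← hinj (hz.symm.trans hl')]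
  refine ⟨Option ι, inferInstance, sandEdges e T, sandConf e T (S ⊥), isASM_sandEdges e T hsymm,
    ⟨sandConf e T (S ⊤), hup _ _ bot_le, ?_, ?_⟩, ?_⟩
  · intro v hv
    obtain ⟨i, -, hi, hT⟩ := (firable_sandConf_iff hsymm _ _).1 hv
    obtain ⟨y, hy⟩ := hstep ⊤ i hi hT
    exact hi ((hS y ⊤).1 le_top (hy ▸ Finset.mem_insert_self i (S ⊤)))
  · rintro c ⟨l, hl, rfl⟩
    obtain ⟨y, -, hy⟩ := hdown l ⊥ hl
    rw [hy]
    exact hup _ _ le_top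
  · refine ⟨Equiv.ofBijective (fun x => ⟨sandConf e T (S x), hup _ _ bot_le⟩) ⟨?_, ?_⟩, ?_⟩
    · exact fun x y h => hinj (congrArg Subtype.val h)
    · rintro ⟨c, l, hl, rfl⟩
      obtain ⟨y, -, hy⟩ := hdown l ⊥ hl
      exact ⟨y, Subtype.ext hy.symm⟩
    · exact fun a b => (hreach a b).symm

end Game

lemma le_of_mem_uset {L : Type*} [Lattice L] {m a : L} (ha : a ∈ Uset m) : a ≤ m := by
  obtain ⟨b, -, hb⟩ := ha.1
  have : m ∈ MsetDiff a b := hb ▸ rfl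
  exact this.2.1

section FiniteLattice

variable {L : Type*} [Lattice L] [Fintype L]

lemma exists_meetIrred_of_not_le {x y : L} (hxy : ¬ y ≤ x) :
    ∃ m, MeetIrred m ∧ x ≤ m ∧ ¬ y ≤ m := by
  obtain ⟨m, hxm, hm⟩ := (Set.toFinite {z : L | ¬ y ≤ z}).exists_le_maximal hxy
  refine ⟨m, ?_, hxm, hm.prop⟩
  have hlt : m < m ⊔ y := left_lt_sup.2 hm.prop
  have hle : ∀ z, m < z → m ⊔ y ≤ z := fun z hz =>
    sup_le hz.le (not_not.1 (hm.not_prop_of_gt hz))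
  exact ⟨m ⊔ y, ⟨hlt, fun z hz hz' => hz'.not_ge (hle z hz)⟩,
    fun z hz => ((hle z hz.lt).eq_of_not_lt fun h => hz.2 hlt h).symm⟩

lemma exists_mem_uset_le {m x y : L} (hxy : x ⋖ y) (hm : MsetDiff x y = {m}) :
    ∃ a ∈ Uset m, a ≤ x := by
  obtain ⟨a, hax, ha⟩ := (Set.toFinite {z : L | ∃ y, z ⋖ y ∧ MsetDiff z y = {m}}).exists_le_minimal
    (⟨y, hxy, hm⟩ : x ∈ {z : L | ∃ y, z ⋖ y ∧ MsetDiff z y = {m}})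
  exact ⟨a, ha, hax⟩

lemma exists_mem_lset_ge {m x : L} (hx : ∀ a ∈ Uset m, ¬ a ≤ x) : ∃ l ∈ Lset m, x ≤ l := by
  obtain ⟨l, hxl, hl⟩ := (Set.toFinite {z : L | ∀ a ∈ Uset m, ¬ a ≤ z}).exists_le_maximal hx
  exact ⟨l, hl, hxl⟩

lemma MeetIrred.le_of_covBy_of_lt {m y z : L} (hm : MeetIrred m) (hy : m ⋖ y) (hz : m < z) :
    y ≤ z := by
  obtain ⟨u, hu, huz⟩ := hz.exists_covby_le
  rwa [hm.unique hy hu]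

end FiniteLattice

section ULD

variable {L : Type*} [Lattice L] [Fintype L] [BoundedOrder L]

lemma CovBy.le_uplus {x y : L} (h : x ⋖ y) : y ≤ uplus x := by
  have := Finset.le_sup (f := fun y : L => if x ⋖ y then y else ⊥) (Finset.mem_univ y)
  rwa [if_pos h] at this

/-- Upper covers in a ULD lattice correspond to singletons of a Boolean lattice. -/
lemma IsULD.exists_equiv (h : IsULD L) {x : L} (hx : x ≠ ⊤) :
    ∃ (n : ℕ) (f : ↥(Set.Icc x (uplus x)) ≃o Set (Fin n)),
      ∀ y (hy : x ⋖ y), ∃ i, f ⟨y, hy.le, hy.le_uplus⟩ = {i} := by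
  obtain ⟨n, ⟨f⟩⟩ := h x hx
  refine ⟨n, f, fun y hy => ?_⟩
  have hxmem : x ∈ Set.Icc x (uplus x) := ⟨le_rfl, hy.le.trans hy.le_uplus⟩
  have hfx : f ⟨x, hxmem⟩ = ∅ := by
    rw [← Set.subset_empty_iff]
    exact (OrderIso.le_symm_apply f).1 (f.symm ∅).2.1
  have hne : (f ⟨y, hy.le, hy.le_uplus⟩).Nonempty := by
    rw [Set.nonempty_iff_ne_empty, ← hfx]
    exact fun heq => hy.ne' (congrArg Subtype.val (f.injective heq))
  obtain ⟨i, hi⟩ := hne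
  refine ⟨i, ?_⟩
  have hle : f.symm {i} ≤ ⟨y, hy.le, hy.le_uplus⟩ := by
    rw [OrderIso.symm_apply_le]
    simpa using hi
  rcases hy.eq_or_eq (f.symm {i}).2.1 hle with heq | heq
  · have : f.symm {i} = ⟨x, hxmem⟩ := Subtype.ext heq
    rw [OrderIso.symm_apply_eq, hfx] at this
    exact absurd this (Set.singleton_ne_empty i)
  · have : f.symm {i} = ⟨y, hy.le, hy.le_uplus⟩ := Subtype.ext heq
    rw [← this, OrderIso.apply_symm_apply]

lemma IsULD.not_le_sup (h : IsULD L) {x u₁ u₂ y : L} (h₁ : x ⋖ u₁) (h₂ : x ⋖ u₂) (hy : x ⋖ y)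
    (hy₁ : y ≠ u₁) (hy₂ : y ≠ u₂) : ¬ y ≤ u₁ ⊔ u₂ := by
  obtain ⟨n, f, hf⟩ := h.exists_equiv (ne_top_of_lt hy.lt)
  obtain ⟨i, hi⟩ := hf y hy
  obtain ⟨j, hj⟩ := hf u₁ h₁
  obtain ⟨k, hk⟩ := hf u₂ h₂
  intro hle
  have hij : i ≠ j := by
    rintro rfl
    exact hy₁ (congrArg Subtype.val (f.injective (hi.trans hj.symm)))
  have hik : i ≠ k := by
    rintro rfl
    exact hy₂ (congrArg Subtype.val (f.injective (hi.trans hk.symm)))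
  have hu₁ : u₁ ≤ f.symm {j, k} :=
    show (⟨u₁, h₁.le, h₁.le_uplus⟩ : ↥(Set.Icc x (uplus x))) ≤ _ by
      rw [OrderIso.le_symm_apply, hj]; simp
  have hu₂ : u₂ ≤ f.symm {j, k} :=
    show (⟨u₂, h₂.le, h₂.le_uplus⟩ : ↥(Set.Icc x (uplus x))) ≤ _ by
      rw [OrderIso.le_symm_apply, hk]; simp
  have hy' : (⟨y, hy.le, hy.le_uplus⟩ : ↥(Set.Icc x (uplus x))) ≤ f.symm {j, k} :=
    show y ≤ f.symm {j, k} from hle.trans (sup_le hu₁ hu₂)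
  rw [OrderIso.le_symm_apply, hi] at hy'
  have : i ∈ ({j, k} : Set (Fin n)) := hy' rfl
  simp [hij, hik] at this

lemma IsULD.covBy_sup_of_covBy (h : IsULD L) {x u y : L} (hu : x ⋖ u) (hy : x ⋖ y) (hne : u ≠ y) :
    u ⋖ u ⊔ y := by
  obtain ⟨n, f, hf⟩ := h.exists_equiv (ne_top_of_lt hy.lt)
  obtain ⟨i, hi⟩ := hf y hy
  obtain ⟨j, hj⟩ := hf u hu
  have hyu : ¬ y ≤ u := fun hle =>
    hne.symm (hle.eq_of_not_lt fun hlt => hu.2 hy.lt hlt)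
  refine ⟨left_lt_sup.2 hyu, fun t hut htu => ?_⟩
  have hsup : u ⊔ y ≤ uplus x := sup_le hu.le_uplus hy.le_uplus
  have ht : t ∈ Set.Icc x (uplus x) := ⟨hu.le.trans hut.le, htu.le.trans hsup⟩
  have hjt : {j} ⊂ f ⟨t, ht⟩ := by
    rw [← hj]
    exact f.strictMono hut
  have htf : (⟨t, ht⟩ : ↥(Set.Icc x (uplus x))) ≤ f.symm {j, i} := by
    have hu₁ : u ≤ f.symm {j, i} :=
      show (⟨u, hu.le, hu.le_uplus⟩ : ↥(Set.Icc x (uplus x))) ≤ _ by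
        rw [OrderIso.le_symm_apply, hj]; simp
    have hy₁ : y ≤ f.symm {j, i} :=
      show (⟨y, hy.le, hy.le_uplus⟩ : ↥(Set.Icc x (uplus x))) ≤ _ by
        rw [OrderIso.le_symm_apply, hi]; simp
    exact show t ≤ f.symm {j, i} from htu.le.trans (sup_le hu₁ hy₁)
  rw [OrderIso.le_symm_apply] at htf
  obtain ⟨k, hk, hkj⟩ := Set.exists_of_ssubset hjt
  have hki : k = i := by
    have := htf hk
    simp only [Set.mem_insert_iff, Set.mem_singleton_iff] at this hkj
    tauto
  subst hki
  have hyt : (⟨y, hy.le, hy.le_uplus⟩ : ↥(Set.Icc x (uplus x))) ≤ ⟨t, ht⟩ := by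
    rw [← f.le_iff_le, hi]
    simpa using hk
  exact htu.not_ge (sup_le hut.le hyt)

/-- A finite ULD lattice is upper semimodular. -/
lemma IsULD.covBy_sup (h : IsULD L) {x y z : L} (hxy : x ⋖ y) (hxz : x ≤ z) (hyz : ¬ y ≤ z) :
    z ⋖ z ⊔ y := by
  induction x using WellFoundedGT.induction generalizing y with
  | ind x ih =>
    rcases hxz.eq_or_lt with rfl | hlt
    · rwa [sup_eq_right.2 hxy.le]
    · obtain ⟨u, hu, huz⟩ := hlt.exists_covby_le
      have hne : u ≠ y := by rintro rfl; exact hyz huz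
      have := ih u hu.lt (h.covBy_sup_of_covBy hu hxy hne) huz
        fun hle => hyz (le_sup_right.trans hle)
      rwa [← sup_assoc, sup_eq_left.2 huz] at this

lemma IsULD.not_le_sup_of_covBy (h : IsULD L) {x y z₁ z₂ : L} (hxy : x ⋖ y)
    (h₁ : x ≤ z₁) (h₂ : x ≤ z₂) (hy₁ : ¬ y ≤ z₁) (hy₂ : ¬ y ≤ z₂) : ¬ y ≤ z₁ ⊔ z₂ := by
  induction x using WellFoundedGT.induction generalizing y z₁ z₂ with
  | ind x ih =>
    have step : ∀ u, x ⋖ u → ∀ t₁ t₂, u ≤ t₁ → u ≤ t₂ → ¬ y ≤ t₁ → ¬ y ≤ t₂ → ¬ y ≤ t₁ ⊔ t₂ := by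
      intro u hu t₁ t₂ hu₁ hu₂ ht₁ ht₂ hle
      have hne : u ≠ y := by rintro rfl; exact ht₁ hu₁
      exact ih u hu.lt (h.covBy_sup_of_covBy hu hxy hne) hu₁ hu₂
        (fun hle => ht₁ (le_sup_right.trans hle)) (fun hle => ht₂ (le_sup_right.trans hle))
        (sup_le (hu₁.trans le_sup_left) hle)
    rcases h₁.eq_or_lt with rfl | hlt₁
    · rwa [sup_eq_right.2 h₂]
    rcases h₂.eq_or_lt with rfl | hlt₂
    · rwa [sup_eq_left.2 h₁]
    obtain ⟨u₁, hu₁, huz₁⟩ := hlt₁.exists_covby_le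
    obtain ⟨u₂, hu₂, huz₂⟩ := hlt₂.exists_covby_le
    have hyu : ¬ y ≤ u₁ ⊔ u₂ := h.not_le_sup hu₁ hu₂ hxy
      (by rintro rfl; exact hy₁ huz₁) (by rintro rfl; exact hy₂ huz₂)
    have hz₁ : ¬ y ≤ z₁ ⊔ (u₁ ⊔ u₂) := step u₁ hu₁ _ _ huz₁ le_sup_left hy₁ hyu
    have hz : ¬ y ≤ (z₁ ⊔ (u₁ ⊔ u₂)) ⊔ z₂ :=
      step u₂ hu₂ _ _ (le_sup_right.trans le_sup_right) huz₂ hz₁ hy₂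
    exact fun hle => hz (hle.trans (sup_le_sup_right le_sup_left z₂))

/-- Each cover in a finite ULD lattice is labelled by a unique meet-irreducible. -/
lemma IsULD.exists_msetDiff_eq (h : IsULD L) {x y : L} (hxy : x ⋖ y) :
    ∃ m, MeetIrred m ∧ MsetDiff x y = {m} := by
  obtain ⟨m, hm, hxm, hym⟩ := exists_meetIrred_of_not_le hxy.lt.not_ge
  have key : ∀ {m₁ m₂ : L}, m₁ ∈ MsetDiff x y → m₂ ∈ MsetDiff x y → m₂ ≤ m₁ := by
    rintro m₁ m₂ ⟨hi₁, hx₁, hy₁⟩ ⟨-, hx₂, hy₂⟩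
    by_contra hle
    have := hi₁.le_of_covBy_of_lt (h.covBy_sup hxy hx₁ hy₁) (left_lt_sup.2 hle)
    exact h.not_le_sup_of_covBy hxy hx₁ hx₂ hy₁ hy₂ (le_sup_right.trans this)
  have hmem : m ∈ MsetDiff x y := ⟨hm, hxm, hym⟩
  exact ⟨m, hm, Set.eq_singleton_iff_unique_mem.2
    ⟨hmem, fun z hz => le_antisymm (key hmem hz) (key hz hmem)⟩⟩

lemma IsULD.msetDiff_eq_of_mem (h : IsULD L) {x y m : L} (hxy : x ⋖ y) (hm : m ∈ MsetDiff x y) :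
    MsetDiff x y = {m} := by
  obtain ⟨m', -, h'⟩ := h.exists_msetDiff_eq hxy
  rw [h'] at hm ⊢
  rw [Set.mem_singleton_iff.1 hm]

lemma IsULD.exists_covBy_of_mem_uset (h : IsULD L) {m a x : L} (ha : a ∈ Uset m) (hax : a ≤ x)
    (hxm : x ≤ m) : ∃ y, x ⋖ y ∧ MsetDiff x y = {m} := by
  obtain ⟨b, hab, hb⟩ := ha.1
  obtain ⟨hm, -, hbm⟩ : m ∈ MsetDiff a b := hb ▸ rfl
  have hcov := h.covBy_sup hab hax fun hbx => hbm (hbx.trans hxm)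
  exact ⟨x ⊔ b, hcov,
    h.msetDiff_eq_of_mem hcov ⟨hm, hxm, fun hle => hbm (le_sup_right.trans hle)⟩⟩

lemma IsULD.exists_mem_uset_le_of_not_le (h : IsULD L) {m : L} (hm : MeetIrred m) (x : L)
    (hx : ¬ x ≤ m) : ∃ a ∈ Uset m, a ≤ x := by
  induction x using WellFoundedLT.induction with
  | ind x ih =>
    have hbot : ⊥ < x := bot_lt_iff_ne_bot.2 (by rintro rfl; exact hx bot_le)
    obtain ⟨z, -, hz⟩ := hbot.exists_le_covby
    by_cases hzm : z ≤ m
    · obtain ⟨a, ha, haz⟩ := exists_mem_uset_le hz (h.msetDiff_eq_of_mem hz ⟨hm, hzm, hx⟩)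
      exact ⟨a, ha, haz.trans hz.le⟩
    · obtain ⟨a, ha, haz⟩ := ih z hz.lt hzm
      exact ⟨a, ha, haz.trans hz.le⟩

lemma IsULD.not_varOccurs_self (h : IsULD L) (m : L) : ¬ VarOccurs m m := by
  rintro ⟨hm, -, a, ha | ha, -, ham⟩
  · exact ham (le_of_mem_uset ha)
  · obtain ⟨b, hb, hba⟩ := h.exists_mem_uset_le_of_not_le hm a ham
    exact ha.1 b hb hba

end ULD

/-- Symmetric edge weights extracted from the variables of `Ω`. -/
noncomputable def omegaWeight {L : Type*} [Lattice L] [OrderBot L] (Ee : L → L → ℕ) (m₁ m₂ : L) :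
    ℕ :=
  if m₁ = m₂ then 0 else if VarOccurs m₁ m₂ then Ee m₁ m₂ else if VarOccurs m₂ m₁ then Ee m₂ m₁
  else 0

/-- The threshold of fired weight above which `m` becomes firable. -/
noncomputable def omegaThreshold {L : Type*} [Lattice L] [OrderBot L] (W : L → ℕ) (m : L) : ℕ :=
  if Uset m = {⊥} then 0 else W m

/-- if the system `Ω` of a finite ULD lattice `L` has a non-negative
integer solution, then `L` belongs to `L(ASM)`. -/
theorem stmt10 {L : Type*} [Lattice L] [Fintype L] [BoundedOrder L]
    (hULD : IsULD L) (hSol : HasSolOmega L) :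
    MemLASM L := by
  obtain ⟨W, Ee, hE, hsymm⟩ := hSol
  let μ : Fin (Fintype.card {m : L // MeetIrred m}) ≃ {m : L // MeetIrred m} :=
    (Fintype.equivFin _).symm
  let S : L → Finset (Fin (Fintype.card {m : L // MeetIrred m})) :=
    fun x => {i | ¬ x ≤ (μ i).1}
  have mem_S : ∀ x i, i ∈ S x ↔ ¬ x ≤ (μ i).1 := fun x i => by simp [S]
  have hS : ∀ x y, x ≤ y ↔ S x ⊆ S y := by
    refine fun x y => ⟨fun hxy i => ?_, fun hsub => ?_⟩
    · rw [mem_S, mem_S]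
      exact fun h h' => h (hxy.trans h')
    · by_contra hxy
      obtain ⟨m, hm, hym, hxm⟩ := exists_meetIrred_of_not_le hxy
      have := @hsub (μ.symm ⟨m, hm⟩)
      simp [mem_S, hym, hxm] at this
  have hinsert : ∀ {x y i}, x ⋖ y → MsetDiff x y = {(μ i).1} → S y = insert i (S x) := by
    intro x y i hxy hd
    ext j
    have hj : (μ j).1 ∈ MsetDiff x y ↔ j = i := by
      rw [hd, Set.mem_singleton_iff, Subtype.val_inj, μ.injective.eq_iff]
    have hj' : (μ j).1 ∈ MsetDiff x y ↔ x ≤ (μ j).1 ∧ ¬ y ≤ (μ j).1 :=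
      ⟨fun h => h.2, fun h => ⟨(μ j).2, h⟩⟩
    rw [Finset.mem_insert, mem_S, mem_S, ← hj, hj']
    have : y ≤ (μ j).1 → x ≤ (μ j).1 := hxy.le.trans
    tauto
  let e := fun i j => omegaWeight Ee (μ i).1 (μ j).1
  have hsum : ∀ i a, Uset (μ i).1 ≠ {⊥} → a ∈ Uset (μ i).1 ∪ Lset (μ i).1 →
      ∑ j ∈ S a, e j i = ∑ᶠ x ∈ MnotAbove a, Ee x (μ i).1 := by
    intro i a hU ha
    have himg : MnotAbove a = (fun j => (μ j).1) '' (S a : Set _) := by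
      ext x
      constructor
      · rintro ⟨hx, hax⟩
        exact ⟨μ.symm ⟨x, hx⟩, by simp [mem_S, hax], by simp⟩
      · rintro ⟨j, hj, rfl⟩
        exact ⟨(μ j).2, (mem_S a j).1 hj⟩
    have hμ : Function.Injective fun j => (μ j).1 := Subtype.val_injective.comp μ.injective
    rw [himg, finsum_mem_image hμ.injOn, finsum_mem_coe_finset]
    refine Finset.sum_congr rfl fun j hj => ?_
    have hocc : VarOccurs (μ j).1 (μ i).1 := ⟨(μ i).2, hU, a, ha, (μ j).2, (mem_S a j).1 hj⟩
    have hne : (μ j).1 ≠ (μ i).1 := fun heq => hULD.not_varOccurs_self _ (heq ▸ hocc)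
    simp only [e, omegaWeight, if_neg hne, if_pos hocc]
  have hthr : ∀ x i, omegaThreshold W (μ i).1 ≤ ∑ j ∈ S x, e j i ↔
      ∃ a ∈ Uset (μ i).1, a ≤ x := by
    intro x i
    by_cases hU : Uset (μ i).1 = {⊥}
    · simp [omegaThreshold, hU]
    · obtain ⟨hlow, hupp⟩ := (hE _ (μ i).2).2 hU
      rw [omegaThreshold, if_neg hU]
      constructor
      · intro hle
        by_contra! hx
        obtain ⟨l, hl, hxl⟩ := exists_mem_lset_ge hx
        have h₁ := hlow l hl
        rw [← hsum i l hU (Or.inr hl)] at h₁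
        have h₂ : ∑ j ∈ S x, e j i ≤ ∑ j ∈ S l, e j i :=
          Finset.sum_le_sum_of_subset ((hS x l).1 hxl)
        omega
      · rintro ⟨a, ha, hax⟩
        have h₁ := hupp a ha
        rw [← hsum i a hU (Or.inl ha)] at h₁
        exact h₁.trans (Finset.sum_le_sum_of_subset ((hS a x).1 hax))
  refine memLASM_of_representation (e := e) (T := fun i => omegaThreshold W (μ i).1) S hS ?_ ?_ ?_
    ?_ ?_
  · ext i
    simp [mem_S]
  · intro i j
    simp only [e, omegaWeight, eq_comm (a := (μ j).1)]
    split_ifs with h₁ h₂ h₃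
    · rfl
    · exact hsymm _ _ h₁ h₂ h₃
    all_goals rfl
  · intro i
    simp [e, omegaWeight]
  · intro x i hi hT
    obtain ⟨a, ha, hax⟩ := (hthr x i).1 hT
    rw [mem_S, not_not] at hi
    obtain ⟨y, hxy, hd⟩ := hULD.exists_covBy_of_mem_uset ha hax hi
    refine ⟨y, ?_⟩
    convert hinsert hxy hd
  · intro x y hxy
    obtain ⟨m, hm, hd⟩ := hULD.exists_msetDiff_eq hxy
    obtain ⟨i, rfl⟩ : ∃ i, (μ i).1 = m := ⟨μ.symm ⟨m, hm⟩, by simp⟩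
    have hmem : (μ i).1 ∈ MsetDiff x y := hd ▸ rfl
    refine ⟨i, ?_, ?_, (hthr x i).2 (exists_mem_uset_le hxy hd)⟩
    · rw [mem_S, not_not]
      exact hmem.2.1
    · convert hinsert hxy hd
end
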